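/- arXiv:1808.10322 — 2 statements merged into one kernel-verified Lean document; each statement's English description precedes it below -/
import Mathlib

section
/- Let (p_r, n_r) and (p_i, n_i) be oriented points in ℝ³ with p_r = 0, where n_r, n_i are unit vectors and p_i ≠ 0, and let (p_r', n_r') = (0, n_r') and (p_i', n_i') be another such pair. If the two pairs have equal point pair features, i.e. ‖p_i‖ = ‖p_i'‖, ⟪n_r, n_i⟫ = ⟪n_r', n_i'⟫, ⟪n_r, −p_i/‖p_i‖⟫ = ⟪n_r', −p_i'/‖p_i'‖⟫, and ⟪n_i, −p_i/‖p_i‖⟫ = ⟪n_i', −p_i'/‖p_i'‖⟫, then there exists a linear isometry R ∈ O(3) (an orthogonal transformation of ℝ³) such that R n_r = n_r', R n_i = n_i', and R p_i = p_i'. -/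
open scoped RealInnerProductSpace

lemma aux_extend {V E : Type*} [AddCommGroup V] [Module ℝ V]
    [NormedAddCommGroup E] [InnerProductSpace ℝ E] [FiniteDimensional ℝ E]
    (A B : V →ₗ[ℝ] E) (h : ∀ c, ‖A c‖ = ‖B c‖) :
    ∃ R : E ≃ₗᵢ[ℝ] E, ∀ c, R (A c) = B c := by
  have hk : LinearMap.ker A ≤ LinearMap.ker B := by
    intro c hc
    rw [LinearMap.mem_ker] at hc ⊢
    rw [← norm_eq_zero, ← h, hc, norm_zero]
  let L : LinearMap.range A →ₗ[ℝ] E :=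
    ((LinearMap.ker A).liftQ B hk) ∘ₗ A.quotKerEquivRange.symm.toLinearMap
  have hL : ∀ c (hc : A c ∈ LinearMap.range A), L ⟨A c, hc⟩ = B c := by
    intro c hc
    have : A.quotKerEquivRange.symm ⟨A c, hc⟩ = (LinearMap.ker A).mkQ c :=
      A.quotKerEquivRange_symm_apply_image c hc
    simp only [L, LinearMap.comp_apply, LinearEquiv.coe_coe, this]
    simp
  let S : LinearMap.range A →ₗᵢ[ℝ] E := ⟨L, by
    rintro ⟨_, c, rfl⟩
    exact (congrArg norm (hL c (LinearMap.mem_range_self A c))).trans (h c).symm⟩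
  refine ⟨S.extend.toLinearIsometryEquiv rfl, fun c => ?_⟩
  have := S.extend_apply ⟨A c, LinearMap.mem_range_self A c⟩
  simp only [LinearIsometry.coe_toLinearIsometryEquiv]
  exact this.trans (hL c _)

/-- Equal point pair features (with reference points at the origin) imply the
two oriented point pairs are related by a linear isometry (orthogonal transformation) of ℝ³. -/
theorem ppf_determines_pair_up_to_orthogonal
    (n_r n_i p_i n_r' n_i' p_i' : EuclideanSpace ℝ (Fin 3))
    (hnr : ‖n_r‖ = 1) (hni : ‖n_i‖ = 1) (hnr' : ‖n_r'‖ = 1) (hni' : ‖n_i'‖ = 1)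
    (hp : p_i ≠ 0) (hp' : p_i' ≠ 0)
    (hdist : ‖p_i‖ = ‖p_i'‖)
    (hangle_nn : ⟪n_r, n_i⟫ = ⟪n_r', n_i'⟫)
    (hangle_rd : ⟪n_r, ‖p_i‖⁻¹ • (-p_i)⟫ = ⟪n_r', ‖p_i'‖⁻¹ • (-p_i')⟫)
    (hangle_id : ⟪n_i, ‖p_i‖⁻¹ • (-p_i)⟫ = ⟪n_i', ‖p_i'‖⁻¹ • (-p_i')⟫) :
    ∃ R : EuclideanSpace ℝ (Fin 3) ≃ₗᵢ[ℝ] EuclideanSpace ℝ (Fin 3),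
      R n_r = n_r' ∧ R n_i = n_i' ∧ R p_i = p_i' := by
  have hpn : ‖p_i'‖ ≠ 0 := norm_ne_zero_iff.mpr hp'
  rw [hdist] at hangle_rd hangle_id
  simp only [inner_smul_right, inner_neg_right] at hangle_rd hangle_id
  have h1 : ⟪n_r, p_i⟫ = ⟪n_r', p_i'⟫ :=
    neg_injective (mul_left_cancel₀ (inv_ne_zero hpn) hangle_rd)
  have h2 : ⟪n_i, p_i⟫ = ⟪n_i', p_i'⟫ :=
    neg_injective (mul_left_cancel₀ (inv_ne_zero hpn) hangle_id)
  obtain ⟨R, hR⟩ := aux_extend (Fintype.linearCombination ℝ ![n_r, n_i, p_i])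
    (Fintype.linearCombination ℝ ![n_r', n_i', p_i']) (by
      intro c
      simp only [Fintype.linearCombination_apply, Fin.sum_univ_three, Matrix.cons_val]
      rw [← sq_eq_sq₀ (norm_nonneg _) (norm_nonneg _)]
      simp only [norm_add_sq_real, inner_add_left, inner_smul_left, inner_smul_right, norm_smul,
        hnr, hni, hnr', hni', hdist, hangle_nn, h1, h2])
  refine ⟨R, ?_, ?_, ?_⟩
  · simpa [Fintype.linearCombination_apply, Fin.sum_univ_three] using hR ![1, 0, 0]
  · simpa [Fintype.linearCombination_apply, Fin.sum_univ_three] using hR ![0, 1, 0]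
  · simpa [Fintype.linearCombination_apply, Fin.sum_univ_three] using hR ![0, 0, 1]
end

section
/- Let (0, n_r, p_i, n_i) and (0, n_r, p_i', n_i') be two configurations in ℝ³ with the same reference normal n_r (a unit vector), with n_i, n_i' unit vectors and p_i, p_i' ≠ 0. If the two configurations have equal point pair features, i.e. ‖p_i‖ = ‖p_i'‖, ⟪n_r, n_i⟫ = ⟪n_r, n_i'⟫, ⟪n_r, −p_i/‖p_i‖⟫ = ⟪n_r, −p_i'/‖p_i'‖⟫, and ⟪n_i, −p_i/‖p_i‖⟫ = ⟪n_i', −p_i'/‖p_i'‖⟫, then there exists an orthogonal transformation R ∈ O(3) fixing the reference normal, R n_r = n_r, such that R n_i = n_i' and R p_i = p_i'. In other words, the PPF determines the oriented point pair up to a rotation or reflection about the normal of the reference point. -/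
open scoped RealInnerProductSpace

theorem exists_isometry_of_norm_eq {W V : Type*} [AddCommGroup W] [Module ℝ W]
    [NormedAddCommGroup V] [InnerProductSpace ℝ V] [FiniteDimensional ℝ V]
    (A B : W →ₗ[ℝ] V) (h : ∀ c, ‖A c‖ = ‖B c‖) :
    ∃ R : V ≃ₗᵢ[ℝ] V, ∀ c, R (A c) = B c := by
  have hk : LinearMap.ker A ≤ LinearMap.ker B := by
    intro c hc
    rw [LinearMap.mem_ker] at hc ⊢
    rw [← norm_eq_zero, ← h, hc, norm_zero]
  let L : LinearMap.range A →ₗ[ℝ] V :=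
    ((LinearMap.ker A).liftQ B hk) ∘ₗ (A.quotKerEquivRange.symm : _ →ₗ[ℝ] _)
  have hL : ∀ c, L ⟨A c, LinearMap.mem_range_self A c⟩ = B c := by
    intro c
    have : A.quotKerEquivRange.symm ⟨A c, LinearMap.mem_range_self A c⟩
        = (LinearMap.ker A).mkQ c := by
      rw [LinearEquiv.symm_apply_eq]
      rfl
    simp only [L, LinearMap.comp_apply, LinearEquiv.coe_coe, this]
    simp
  let Li : LinearMap.range A →ₗᵢ[ℝ] V := ⟨L, by
    rintro ⟨x, c, rfl⟩
    rw [hL, ← h]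
    rfl⟩
  refine ⟨Li.extend.toLinearIsometryEquiv rfl, fun c => ?_⟩
  have := Li.extend_apply ⟨A c, LinearMap.mem_range_self A c⟩
  simpa using this.trans (hL c)

/-- With a common reference normal, equal point pair features imply the two
configurations are related by an orthogonal transformation fixing the reference normal,
i.e. a rotation or reflection about the normal of the reference point. -/
theorem ppf_determines_pair_up_to_rotation_about_normal
    (n_r n_i p_i n_i' p_i' : EuclideanSpace ℝ (Fin 3))
    (hnr : ‖n_r‖ = 1) (hni : ‖n_i‖ = 1) (hni' : ‖n_i'‖ = 1)
    (hp : p_i ≠ 0) (hp' : p_i' ≠ 0)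
    (hdist : ‖p_i‖ = ‖p_i'‖)
    (hangle_nn : ⟪n_r, n_i⟫ = ⟪n_r, n_i'⟫)
    (hangle_rd : ⟪n_r, ‖p_i‖⁻¹ • (-p_i)⟫ = ⟪n_r, ‖p_i'‖⁻¹ • (-p_i')⟫)
    (hangle_id : ⟪n_i, ‖p_i‖⁻¹ • (-p_i)⟫ = ⟪n_i', ‖p_i'‖⁻¹ • (-p_i')⟫) :
    ∃ R : EuclideanSpace ℝ (Fin 3) ≃ₗᵢ[ℝ] EuclideanSpace ℝ (Fin 3),
      R n_r = n_r ∧ R n_i = n_i' ∧ R p_i = p_i' := by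
  have h0 : ‖p_i‖⁻¹ ≠ 0 := inv_ne_zero (norm_ne_zero_iff.mpr hp)
  rw [← hdist, inner_smul_right, inner_smul_right, inner_neg_right, inner_neg_right] at hangle_rd hangle_id
  have h1 := neg_injective (mul_left_cancel₀ h0 hangle_rd)
  have h2 := neg_injective (mul_left_cancel₀ h0 hangle_id)
  let F (a b c : EuclideanSpace ℝ (Fin 3)) : (ℝ × ℝ × ℝ) →ₗ[ℝ] EuclideanSpace ℝ (Fin 3) :=
    (LinearMap.toSpanSingleton ℝ _ a).coprod
      ((LinearMap.toSpanSingleton ℝ _ b).coprod (LinearMap.toSpanSingleton ℝ _ c))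
  have hF : ∀ a b c x y z, F a b c (x, y, z) = x • a + (y • b + z • c) := by
    intros
    simp [F]
  obtain ⟨R, hR⟩ := exists_isometry_of_norm_eq (F n_r n_i p_i) (F n_r n_i' p_i') (by
    rintro ⟨x, y, z⟩
    rw [hF, hF, ← sq_eq_sq₀ (norm_nonneg _) (norm_nonneg _)]
    simp only [norm_add_sq_real, inner_add_right, inner_smul_left, inner_smul_right,
      norm_smul, hni, hni', hdist, hangle_nn, h1, h2])
  refine ⟨R, ?_, ?_, ?_⟩
  · simpa [hF] using hR (1, 0, 0)
  · simpa [hF] using hR (0, 1, 0)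
  · simpa [hF] using hR (0, 0, 1)
end
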